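/- For every real α > 1 let c_α := min( 1 + 2^{α−4} − 1/8, 1 + (2^{α−1}−1)/(3·2^α+2), 1 + min(2^α−1, (3^α−2^α−1)/2, (4^α−2^α−2)/3)/(4(2^α+1)) ); then c_α > 1, and there exists N such that for every n ≥ N there exist a circumference L > 0, a set P of 2n+2 points on the circle of circumference L containing a source s, and a point q on that circle with q ∉ P, with the following property: for every feasible range assignment ρ for P with cost_α(ρ) ≤ c_α·opt_α(P) and every feasible range assignment ρ' for P ∪ {q} with cost_α(ρ') ≤ c_α·opt_α(P∪{q}), the number of points p ∈ P ∪ {q} with ρ(p) ≠ ρ'(p) is greater than 2n/3 − 1, where ρ is extended by ρ(q) = 0. (Hence the dynamic broadcast range-assignment problem on the circle admits no stable approximation scheme.) -/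

import Mathlib

open Finset

attribute [local instance] Classical.propDecidable

/-- A range assignment `ρ` for a finite point set `P` with source `s` is *feasible* if it is
nonnegative on `P` and every point of `P` is reachable from `s` via a sequence of points of `P`
in which each step is within the range of its starting point. -/
def Feasible {X : Type*} [MetricSpace X] (P : Finset X) (s : X) (ρ : X → ℝ) : Prop :=
  (∀ p ∈ P, 0 ≤ ρ p) ∧
  ∀ p ∈ P, ∃ (m : ℕ) (f : ℕ → X), f 0 = s ∧ f m = p ∧ (∀ i ≤ m, f i ∈ P) ∧
    ∀ i < m, dist (f i) (f (i + 1)) ≤ ρ (f i)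

/-- The cost `∑_{p ∈ P} ρ(p)^α` of a range assignment. -/
noncomputable def cost {X : Type*} (α : ℝ) (P : Finset X) (ρ : X → ℝ) : ℝ :=
  ∑ p ∈ P, ρ p ^ α

/-- The optimal broadcast cost: the infimum of `cost α P ρ` over feasible `ρ`. -/
noncomputable def opt {X : Type*} [MetricSpace X] (α : ℝ) (P : Finset X) (s : X) : ℝ :=
  sInf {c : ℝ | ∃ ρ : X → ℝ, Feasible P s ρ ∧ cost α P ρ = c}

/-- The constant `c_α` from the no-SAS proof on the circle. -/
noncomputable def cAlpha (α : ℝ) : ℝ :=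
  min (1 + 2 ^ (α - 4) - 1 / 8)
    (min (1 + (2 ^ (α - 1) - 1) / (3 * 2 ^ α + 2))
      (1 + min (2 ^ α - 1) (min ((3 ^ α - 2 ^ α - 1) / 2) ((4 ^ α - 2 ^ α - 2) / 3)) /
        (4 * (2 ^ α + 1))))

/-! Starting at the source, the circle consists of an arc of length `a`, of `2 * n` alternating gaps
`1, 2, 1, 2, …` and of two arcs of length `h` separated by the new point, where `a` and `h` have
order `n ^ α⁻¹` and `2 * h ^ α < a ^ α`. Without the new point it is cheapest to cross the arc `a`
and to give every point the gap after it as range; with the new point it is cheapest to cross the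
two arcs `h` and to give every point the gap before it. As the gaps alternate, these two assignments
differ at every inner point.

That near-optimal assignments look alike is seen by charging each gap to a range that bridges it: a
point whose range is not in `[g, g + 1)`, where `g` is the gap to be bridged, wastes at least
`minExcess α`, and the allowed slack pays for at most `n / 2` such points before and after the
insertion. Broadcasting in both directions at once does not help: it requires an outer range `R`
that reaches both ends of the line of gaps, and so costs an extra amount proportional to `n`, while
it saves only the gap where the two directions meet and an amount linear in `R`, which is of order
`n ^ α⁻¹`. -/

lemma convexOn_map_add_add_map_le {s : Set ℝ} {f : ℝ → ℝ} (hf : ConvexOn ℝ s f) {x y d : ℝ}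
    (hx : x ∈ s) (hyd : y + d ∈ s) (hxy : x ≤ y) (hd : 0 ≤ d) :
    f (x + d) + f y ≤ f x + f (y + d) := by
  rcases hd.eq_or_lt with rfl | hd
  · simp
  have hw : 0 < y - x + d := by linarith
  set p := d / (y - x + d) with hp
  have hp0 : 0 ≤ p := by positivity
  have hp1 : 0 ≤ 1 - p := by
    rw [sub_nonneg, hp, div_le_one hw]
    linarith
  have hpw : p * (y - x + d) = d := div_mul_cancel₀ d hw.ne'
  have left : f (x + d) ≤ (1 - p) * f x + p * f (y + d) := by
    have := hf.2 hx hyd hp1 hp0 (sub_add_cancel 1 p)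
    rwa [smul_eq_mul, smul_eq_mul, show (1 - p) * x + p * (y + d) = x + d by linarith] at this
  have right : f y ≤ p * f x + (1 - p) * f (y + d) := by
    have := hf.2 hx hyd hp0 hp1 (add_sub_cancel p 1)
    rwa [smul_eq_mul, smul_eq_mul, show p * x + (1 - p) * (y + d) = y by linarith] at this
  linarith

lemma rpow_add_rpow_le {α : ℝ} (hα : 1 ≤ α) {x y d : ℝ} (hx : 0 ≤ x) (hxy : x ≤ y)
    (hd : 0 ≤ d) : (x + d) ^ α + y ^ α ≤ x ^ α + (y + d) ^ α :=
  convexOn_map_add_add_map_le (convexOn_rpow hα) hx (Set.mem_Ici.2 (by linarith)) hxy hd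

lemma eventually_add_mul_lt_mul_rpow {α : ℝ} (hα : 1 < α) {A C η : ℝ} (hA : 0 ≤ A) (hη : 0 < η) :
    ∀ᶠ R : ℝ in Filter.atTop, A + C * R < η * R ^ α := by
  filter_upwards [Filter.eventually_ge_atTop 1,
    (tendsto_rpow_atTop (sub_pos.2 hα)).eventually_gt_atTop ((A + C) / η)] with R hR1 hR
  have hR0 : 0 < R := by linarith
  rw [div_lt_iff₀ hη] at hR
  calc A + C * R ≤ (A + C) * R := by nlinarith
    _ < R ^ (α - 1) * η * R := mul_lt_mul_of_pos_right hR hR0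
    _ = η * R ^ α := by
      rw [Real.rpow_sub_one hR0.ne']
      field_simp

lemma eventually_forall_rpow_le_imp_add_mul_lt {α : ℝ} (hα : 1 < α) {A C K δ : ℝ} (hA : 0 ≤ A)
    (hC : 0 ≤ C) (hK : 0 < K) (hδ : 0 < δ) :
    ∀ᶠ y : ℝ in Filter.atTop, ∀ R, R ^ α ≤ K * y → A + C * R < δ * y := by
  obtain ⟨R₀, hR₀⟩ := Filter.eventually_atTop.1
    (eventually_add_mul_lt_mul_rpow hα (C := C) hA (div_pos hδ hK))
  filter_upwards [(Filter.tendsto_id.const_mul_atTop hδ).eventually_gt_atTop (A + C * R₀)]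
    with y hy R hR
  rcases le_total R₀ R with h | h
  · calc A + C * R < δ / K * R ^ α := hR₀ R h
      _ ≤ δ / K * (K * y) := by gcongr
      _ = δ * y := by field_simp
  · calc A + C * R ≤ A + C * R₀ := by gcongr
      _ < δ * y := hy

lemma sum_range_add_sum_range_reverse {M : Type*} [AddCommMonoid M] (f : ℕ → M) {k n : ℕ}
    (hk : k ≤ n) :
    ∑ i ∈ range k, f i + ∑ i ∈ range (n - k), f (n - 1 - i) = ∑ i ∈ range n, f i := by
  obtain ⟨l, rfl⟩ := Nat.exists_eq_add_of_le hk
  rw [sum_range_add, Nat.add_sub_cancel_left, ← sum_range_reflect (fun i => f (k + i))]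
  congr 1
  refine sum_congr rfl fun i hi => ?_
  rw [show k + (l - 1 - i) = k + l - 1 - i by have := mem_range.1 hi; omega]

/-- The least waste forced by a vertex whose range is not essentially the gap it has to bridge,
namely the minimum occurring in the third bound of `cAlpha`. -/
noncomputable def minExcess (α : ℝ) : ℝ :=
  min (2 ^ α - 1) (min ((3 ^ α - 2 ^ α - 1) / 2) ((4 ^ α - 2 ^ α - 2) / 3))

lemma minExcess_le (α : ℝ) : minExcess α ≤ 2 ^ α - 1 := min_le_left _ _

lemma two_mul_minExcess_le (α : ℝ) : 2 * minExcess α ≤ 3 ^ α - 2 ^ α - 1 := by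
  have : minExcess α ≤ (3 ^ α - 2 ^ α - 1) / 2 := (min_le_right _ _).trans (min_le_left _ _)
  linarith

lemma three_mul_minExcess_le (α : ℝ) : 3 * minExcess α ≤ 4 ^ α - 2 ^ α - 2 := by
  have : minExcess α ≤ (4 ^ α - 2 ^ α - 2) / 3 := (min_le_right _ _).trans (min_le_right _ _)
  linarith

lemma minExcess_pos {α : ℝ} (hα : 1 < α) : 0 < minExcess α := by
  have h2 : (2 : ℝ) < 2 ^ α := by simpa using Real.rpow_lt_rpow_of_exponent_lt one_lt_two hα
  have h23 : (1 : ℝ) + 2 ^ α < 3 ^ α := by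
    have h2' : (1 : ℝ) < 2 ^ (α - 1) := Real.one_lt_rpow one_lt_two (by linarith)
    have h3' : (2 : ℝ) ^ (α - 1) < 3 ^ (α - 1) :=
      Real.rpow_lt_rpow zero_le_two (by norm_num) (by linarith)
    rw [Real.rpow_sub_one two_ne_zero] at h2' h3'
    rw [Real.rpow_sub_one three_ne_zero] at h3'
    linarith
  have h4 : (4 : ℝ) ^ α = 2 ^ α * 2 ^ α := by
    rw [← Real.mul_rpow zero_le_two zero_le_two]
    norm_num
  refine lt_min (by linarith) (lt_min (by linarith) ?_)
  rw [h4]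
  nlinarith

/-- The points `0, g 0, g 0 + g 1, …` on a line with consecutive gaps `g 0, g 1, …`. -/
noncomputable def position (g : ℕ → ℝ) (j : ℕ) : ℝ := ∑ i ∈ range j, g i

@[simp]
lemma position_zero (g : ℕ → ℝ) : position g 0 = 0 := sum_range_zero g

lemma position_succ (g : ℕ → ℝ) (j : ℕ) : position g (j + 1) = position g j + g j :=
  sum_range_succ g j

lemma position_add (g : ℕ → ℝ) (j t : ℕ) :
    position g (j + t) = position g j + position (fun i => g (j + i)) t :=
  sum_range_add g j t

lemma position_mono {g : ℕ → ℝ} (hg : ∀ i, 0 ≤ g i) : Monotone (position g) :=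
  monotone_nat_of_le_succ fun j => by linarith [position_succ g j, hg j]

/-- Gap sequences `1, 2, 1, 2, …` and `2, 1, 2, 1, …`. -/
def AlternatesOneTwo (g : ℕ → ℝ) : Prop :=
  ∀ i, (g i = 1 ∧ g (i + 1) = 2) ∨ (g i = 2 ∧ g (i + 1) = 1)

namespace AlternatesOneTwo

variable {g : ℕ → ℝ} (hg : AlternatesOneTwo g)
include hg

lemma eq_one_or_two (i : ℕ) : g i = 1 ∨ g i = 2 := (hg i).imp And.left And.left

lemma one_le (i : ℕ) : 1 ≤ g i := by
  rcases hg.eq_one_or_two i with h | h <;> norm_num [h]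

lemma le_two (i : ℕ) : g i ≤ 2 := by
  rcases hg.eq_one_or_two i with h | h <;> norm_num [h]

lemma nonneg (i : ℕ) : 0 ≤ g i := zero_le_one.trans (hg.one_le i)

lemma shift (j : ℕ) : AlternatesOneTwo fun i => g (j + i) := fun i => hg (j + i)

lemma strictMono_position : StrictMono (position g) :=
  strictMono_nat_of_lt_succ fun j => by linarith [position_succ g j, hg.one_le j]

lemma natCast_le_position (j : ℕ) : (j : ℝ) ≤ position g j := by
  simpa [position] using card_nsmul_le_sum (range j) g 1 fun i _ => hg.one_le i

lemma position_nonneg (j : ℕ) : 0 ≤ position g j := j.cast_nonneg.trans (hg.natCast_le_position j)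

end AlternatesOneTwo

section Charge

variable {α : ℝ}

lemma rpow_add_rpow_add_two_mul_minExcess_le {g : ℕ → ℝ} (hg : AlternatesOneTwo g) (j : ℕ) :
    g j ^ α + g (j + 1) ^ α + 2 * minExcess α ≤ (g j + g (j + 1)) ^ α := by
  have := two_mul_minExcess_le α
  rcases hg j with ⟨h, h'⟩ | ⟨h, h'⟩ <;> rw [h, h'] <;> norm_num <;> linarith

lemma rpow_add_three_mul_minExcess_le (hα : 1 ≤ α) {g : ℕ → ℝ} (hg : AlternatesOneTwo g) :
    g 0 ^ α + g 1 ^ α + g 2 ^ α + 3 * minExcess α ≤ (g 0 + g 1 + g 2) ^ α := by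
  have := minExcess_le α
  have := three_mul_minExcess_le α
  have hpattern : (g 0 = 1 ∧ g 1 = 2 ∧ g 2 = 1) ∨ (g 0 = 2 ∧ g 1 = 1 ∧ g 2 = 2) := by
    grind [hg 0, hg 1]
  rcases hpattern with ⟨h0, h1, h2⟩ | ⟨h0, h1, h2⟩
  · norm_num [h0, h1, h2]
    linarith
  · have h₅ := rpow_add_rpow_le hα (x := 1) (y := 4) (d := 1) zero_le_one (by norm_num) zero_le_one
    norm_num [h0, h1, h2] at h₅ ⊢
    linarith

lemma sum_rpow_add_minExcess_le (hα : 1 ≤ α) {g : ℕ → ℝ} (hg : AlternatesOneTwo g) {t : ℕ}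
    (ht : 2 ≤ t) : ∑ i ∈ range t, (g i ^ α + minExcess α) ≤ position g t ^ α := by
  induction t using Nat.strong_induction_on with
  | _ t ih =>
    obtain rfl | rfl | ht : t = 2 ∨ t = 3 ∨ 4 ≤ t := by omega
    · have := rpow_add_rpow_add_two_mul_minExcess_le (α := α) hg 0
      simp only [position, sum_range_succ, range_zero, sum_empty, zero_add] at this ⊢
      linarith
    · have := rpow_add_three_mul_minExcess_le hα hg
      simp only [position, sum_range_succ, range_zero, sum_empty, zero_add] at this ⊢
      linarith
    · obtain ⟨k, rfl⟩ := Nat.exists_eq_add_of_le' (show 2 ≤ t by omega)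
      have init := ih k (by omega) (by omega)
      have pair := rpow_add_rpow_add_two_mul_minExcess_le (α := α) hg k
      have glue := Real.add_rpow_le_rpow_add (hg.position_nonneg k)
        (add_nonneg (hg.nonneg k) (hg.nonneg (k + 1))) hα
      rw [sum_range_succ, sum_range_succ, position_succ, position_succ, add_assoc (position g k)]
      linarith

/-- The total weight `g i ^ α + minExcess α` of those of the first `N` gaps that lie within
distance `E` to the right of the origin, i.e. that a range `E` at the origin can bridge. -/
noncomputable def prefixCharge (α : ℝ) (g : ℕ → ℝ) (N : ℕ) (E : ℝ) : ℝ :=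
  ∑ i ∈ range N with position g (i + 1) ≤ E, (g i ^ α + minExcess α)

lemma exists_prefixCharge_eq (α : ℝ) {g : ℕ → ℝ} (hg : ∀ i, 0 ≤ g i) (N : ℕ) {E : ℝ}
    (hE : 0 ≤ E) : ∃ t, position g t ≤ E ∧
      prefixCharge α g N E = ∑ i ∈ range t, (g i ^ α + minExcess α) := by
  set t := Nat.findGreatest (fun t => position g t ≤ E) N
  have hpos : position g t ≤ E :=
    Nat.findGreatest_spec (P := fun t => position g t ≤ E) N.zero_le (by simpa using hE)
  refine ⟨t, hpos, sum_congr ?_ fun _ _ => rfl⟩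
  ext i
  simp only [mem_filter, mem_range]
  constructor
  · rintro ⟨hi, hiE⟩
    exact Nat.le_findGreatest hi hiE
  · intro hi
    exact ⟨hi.trans_le (Nat.findGreatest_le N), (position_mono hg hi).trans hpos⟩

lemma prefixCharge_le_mul (hα : 1 < α) {g : ℕ → ℝ} (hg : AlternatesOneTwo g) (N : ℕ) {E : ℝ}
    (hE : 0 ≤ E) : prefixCharge α g N E ≤ (2 ^ α + minExcess α) * E := by
  obtain ⟨t, htE, ht⟩ := exists_prefixCharge_eq α hg.nonneg N hE
  have hm := minExcess_pos hα
  calc prefixCharge α g N E = ∑ i ∈ range t, (g i ^ α + minExcess α) := ht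
    _ ≤ ∑ _i ∈ range t, (2 ^ α + minExcess α) := by
      gcongr with i
      exacts [hg.nonneg i, hg.le_two i]
    _ = (2 ^ α + minExcess α) * t := by rw [sum_const, card_range, nsmul_eq_mul, mul_comm]
    _ ≤ (2 ^ α + minExcess α) * E := by
      gcongr
      exact (hg.natCast_le_position t).trans htE

lemma rpow_add_prefixCharge_le (hα : 1 < α) {g : ℕ → ℝ} (hg : AlternatesOneTwo g) (N : ℕ)
    {x E : ℝ} (hx : 2 ≤ x) (hE : 0 ≤ E) : x ^ α + prefixCharge α g N E ≤ (x + E) ^ α := by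
  obtain ⟨t, htE, ht⟩ := exists_prefixCharge_eq α hg.nonneg N hE
  suffices x ^ α + ∑ i ∈ range t, (g i ^ α + minExcess α) ≤ (x + position g t) ^ α by
    rw [ht]
    refine this.trans (Real.rpow_le_rpow ?_ (by linarith) (by linarith))
    linarith [hg.position_nonneg t]
  obtain rfl | rfl | ht2 : t = 0 ∨ t = 1 ∨ 2 ≤ t := by omega
  · simp
  · have := minExcess_pos hα
    have := minExcess_le α
    have := two_mul_minExcess_le α
    rcases hg.eq_one_or_two 0 with h | h
    · have := rpow_add_rpow_le hα.le (d := 1) zero_le_two hx zero_le_one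
      norm_num [position, h] at this ⊢
      linarith
    · have hx₁ : 1 ≤ x := one_le_two.trans hx
      have := rpow_add_rpow_le hα.le (d := 2) zero_le_one hx₁ zero_le_two
      norm_num [position, h] at this ⊢
      linarith
  · have glue := Real.add_rpow_le_rpow_add (zero_le_two.trans hx) (hg.position_nonneg t) hα.le
    linarith [sum_rpow_add_minExcess_le hα.le hg ht2]

lemma rpow_add_minExcess_le_add_one_rpow (hα : 1 < α) {g : ℕ → ℝ} (hg : AlternatesOneTwo g)
    (i : ℕ) : g i ^ α + minExcess α ≤ (g i + 1) ^ α := by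
  have := minExcess_pos hα
  have := minExcess_le α
  have := two_mul_minExcess_le α
  rcases hg.eq_one_or_two i with h | h <;> norm_num [h] <;> linarith

lemma prefixCharge_add_ite_le (hα : 1 < α) {g : ℕ → ℝ} (hg : AlternatesOneTwo g) (N : ℕ)
    {r : ℝ} (hr : 0 ≤ r) :
    prefixCharge α g N r + (if r ∈ Set.Ico (g 0) (g 0 + 1) then 0 else minExcess α) ≤
      r ^ α + minExcess α := by
  have hα0 : 0 ≤ α := by linarith
  have hm := minExcess_pos hα
  have hite : (if r ∈ Set.Ico (g 0) (g 0 + 1) then 0 else minExcess α) ≤ minExcess α := by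
    split_ifs <;> linarith
  obtain ⟨t, htr, ht⟩ := exists_prefixCharge_eq α hg.nonneg N hr
  have hpow := Real.rpow_le_rpow (hg.position_nonneg t) htr hα0
  rw [ht]
  obtain rfl | rfl | ht2 : t = 0 ∨ t = 1 ∨ 2 ≤ t := by omega
  · linarith [Real.rpow_nonneg hr α, sum_range_zero fun i => g i ^ α + minExcess α]
  · simp only [position, sum_range_one] at htr hpow ⊢
    split_ifs with hgood
    · linarith
    · have hbad : g 0 + 1 ≤ r := not_lt.1 fun h => hgood ⟨htr, h⟩
      have := Real.rpow_le_rpow (by linarith [hg.nonneg 0]) hbad hα0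
      linarith [rpow_add_minExcess_le_add_one_rpow hα hg 0]
  · linarith [sum_rpow_add_minExcess_le hα.le hg ht2]

/-- All of the first `j` gaps are bridged, rightwards, either by an outside range that reaches as
far as `E ≥ 0`, or by the range `r k` of a point `k` on their left. -/
def ForwardReached (g r : ℕ → ℝ) (E : ℝ) (j : ℕ) : Prop :=
  0 ≤ E ∧ ∀ i < j, position g (i + 1) ≤ E ∨ ∃ k ≤ i, position g (i + 1) ≤ position g k + r k

lemma ForwardReached.of_position_le {g r : ℕ → ℝ} {E : ℝ} {j : ℕ} (hg : ∀ i, 0 ≤ g i)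
    (h : position g j ≤ E) : ForwardReached g r E j :=
  ⟨(position_mono hg j.zero_le).trans h |>.trans' (position_zero g).ge,
    fun _ hi => Or.inl ((position_mono hg hi).trans h)⟩

lemma ForwardReached.step {g r : ℕ → ℝ} {E : ℝ} {j k : ℕ} (hg : ∀ i, 0 ≤ g i)
    (hj : ForwardReached g r E j) (h : position g k ≤ position g j + r j) :
    ForwardReached g r E k := by
  refine ⟨hj.1, fun i hi => ?_⟩
  by_cases hij : i < j
  · exact hj.2 i hij
  · exact Or.inr ⟨j, not_lt.1 hij, (position_mono hg hi).trans h⟩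

/-- The points among the first `N` whose range `r j` is not essentially the gap `g j` following
them. -/
noncomputable def looseIndices (g r : ℕ → ℝ) (N : ℕ) : Finset ℕ :=
  {j ∈ range N | r j ∉ Set.Ico (g j) (g j + 1)}

lemma prefixCharge_shift (α : ℝ) (g : ℕ → ℝ) (j N : ℕ) (E : ℝ) :
    prefixCharge α (fun i => g (j + i)) (N - j) E =
      ∑ i ∈ Ico j N with position g (i + 1) ≤ position g j + E, (g i ^ α + minExcess α) := by
  have hpos (i : ℕ) : position g (j + i + 1) =
      position g j + position (fun i => g (j + i)) (i + 1) := position_add g j (i + 1)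
  simp only [prefixCharge, sum_filter, sum_Ico_eq_sum_range, hpos, add_le_add_iff_left]

lemma sum_le_sum_prefixCharge {g r : ℕ → ℝ} {E : ℝ} {N : ℕ}
    (hpos : ∀ i, 0 ≤ g i ^ α + minExcess α) (h : ForwardReached g r E N) :
    ∑ i ∈ range N, (g i ^ α + minExcess α) ≤
      ∑ j ∈ range N, prefixCharge α (fun i => g (j + i)) (N - j) (r j) + prefixCharge α g N E := by
  set w := fun i => g i ^ α + minExcess α
  set C : ℕ → Finset ℕ := fun j => {i ∈ Ico j N | position g (i + 1) ≤ position g j + r j}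
  calc ∑ i ∈ range N, w i
      ≤ ∑ i ∈ range N, ((∑ j ∈ range N, if i ∈ C j then w i else 0) +
          if position g (i + 1) ≤ E then w i else 0) := by
        refine sum_le_sum fun i hi => ?_
        have hsum : ∀ j ∈ range N, 0 ≤ if i ∈ C j then w i else 0 := fun j _ => by
          split_ifs
          exacts [hpos i, le_rfl]
        have hi := mem_range.1 hi
        rcases h.2 i hi with hE | ⟨j, hj, hij⟩
        · rw [if_pos hE]
          exact le_add_of_nonneg_left (sum_nonneg hsum)
        · have hC : i ∈ C j := mem_filter.2 ⟨mem_Ico.2 ⟨hj, hi⟩, hij⟩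
          have := single_le_sum hsum (mem_range.2 (hj.trans_lt hi))
          rw [if_pos hC] at this
          refine this.trans (le_add_of_nonneg_right ?_)
          split_ifs
          exacts [hpos i, le_rfl]
    _ = _ := by
        rw [sum_add_distrib, sum_comm, ← sum_filter]
        congr 1
        refine sum_congr rfl fun j _ => ?_
        rw [prefixCharge_shift, ← sum_filter]
        congr 1
        ext i
        simp only [C, mem_filter, mem_range, mem_Ico]
        tauto

theorem sum_rpow_add_card_looseIndices_le (hα : 1 < α) {g r : ℕ → ℝ} {E : ℝ} {N : ℕ}
    (hg : AlternatesOneTwo g) (hr : ∀ j < N, 0 ≤ r j) (h : ForwardReached g r E N) :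
    ∑ i ∈ range N, g i ^ α + minExcess α * #(looseIndices g r N) ≤
      ∑ j ∈ range N, r j ^ α + prefixCharge α g N E := by
  have hcover := sum_le_sum_prefixCharge (α := α)
    (fun i => add_nonneg (Real.rpow_nonneg (hg.nonneg i) α) (minExcess_pos hα).le) h
  have hlocal := sum_le_sum fun j (hj : j ∈ range N) =>
    prefixCharge_add_ite_le hα (hg.shift j) (N - j) (hr j (mem_range.1 hj))
  have hloose : ∑ j ∈ range N, (if r j ∈ Set.Ico (g j) (g j + 1) then 0 else minExcess α) =
      minExcess α * #(looseIndices g r N) := by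
    rw [looseIndices, card_eq_sum_ones, Nat.cast_sum, mul_sum, sum_filter]
    refine sum_congr rfl fun j _ => ?_
    split_ifs <;> simp_all
  simp only [add_zero, sum_add_distrib] at hcover hlocal
  linarith

lemma sum_rpow_le_sum_rpow_add_mul (hα : 1 < α) {g r : ℕ → ℝ} {E : ℝ} {N : ℕ}
    (hg : AlternatesOneTwo g) (hr : ∀ j < N, 0 ≤ r j) (h : ForwardReached g r E N) :
    ∑ i ∈ range N, g i ^ α ≤ ∑ j ∈ range N, r j ^ α + (2 ^ α + minExcess α) * E := by
  have hloose : 0 ≤ minExcess α * #(looseIndices g r N) :=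
    mul_nonneg (minExcess_pos hα).le (Nat.cast_nonneg _)
  linarith [sum_rpow_add_card_looseIndices_le hα hg hr h, prefixCharge_le_mul hα hg N h.1]

end Charge

section Reverse

variable {α : ℝ} {g g' r : ℕ → ℝ} {M : ℕ}

lemma position_reverse (hrev : ∀ i < M, g' i = g (M - 1 - i)) {i : ℕ} (hi : i ≤ M) :
    position g' i = position g M - position g (M - i) := by
  have h := sum_range_add_sum_range_reverse g (Nat.sub_le M i)
  rw [Nat.sub_sub_self hi] at h
  have hsum : position g' i = ∑ j ∈ range i, g (M - 1 - j) :=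
    sum_congr rfl fun j hj => hrev j ((mem_range.1 hj).trans_le hi)
  rw [hsum, position, position]
  linarith

lemma exists_forwardReached_and_reverse {E : ℝ} (hE : 0 ≤ E)
    (h : ∀ j ≤ M, ForwardReached g r E j ∨ ForwardReached g' (fun k => r (M - k)) E (M - j)) :
    ∃ K ≤ M, ForwardReached g r E K ∧
      ForwardReached g' (fun k => r (M - k)) E (M - (K + 1)) := by
  set K := Nat.findGreatest (ForwardReached g r E) M
  have hKM : K ≤ M := Nat.findGreatest_le M
  have hforward : ForwardReached g r E K :=
    Nat.findGreatest_spec M.zero_le ⟨hE, fun i hi => absurd hi i.not_lt_zero⟩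
  refine ⟨K, hKM, hforward, ?_⟩
  rcases hKM.eq_or_lt with hKM | hKM
  · rw [hKM, Nat.sub_eq_zero_of_le M.le_succ]
    exact ⟨hE, fun i hi => absurd hi i.not_lt_zero⟩
  · exact (h (K + 1) hKM).resolve_left (Nat.findGreatest_is_greatest K.lt_succ_self hKM)

/-- An upper bound for what a broadcast on a line of alternating gaps can save when it is entered
from both sides by ranges at most `R`: the gap at which the two directions meet stays unbridged,
and from either side the outside range bridges at most `R` gaps for free. -/
noncomputable def switchPenalty (α R : ℝ) : ℝ := 2 ^ α + 2 * ((2 ^ α + minExcess α) * R)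

lemma switchPenalty_zero (α : ℝ) : switchPenalty α 0 = 2 ^ α := by simp [switchPenalty]

lemma sum_rpow_le_sum_rpow_add_switchPenalty (hα : 1 < α) (hg : AlternatesOneTwo g)
    (hg' : AlternatesOneTwo g') (hrev : ∀ i < M, g' i = g (M - 1 - i)) (hr : ∀ j ≤ M, 0 ≤ r j)
    {E : ℝ} (hE : 0 ≤ E)
    (h : ∀ j ≤ M, ForwardReached g r E j ∨ ForwardReached g' (fun k => r (M - k)) E (M - j)) :
    ∑ i ∈ range M, g i ^ α ≤ ∑ j ∈ range (M + 1), r j ^ α + switchPenalty α E := by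
  obtain ⟨K, hK, hforward, hbackward⟩ := exists_forwardReached_and_reverse hE h
  have left := sum_rpow_le_sum_rpow_add_mul hα hg (fun j hj => hr j (by omega)) hforward
  have right := sum_rpow_le_sum_rpow_add_mul hα hg' (fun j _ => hr _ (M.sub_le j)) hbackward
  have gaps : ∑ i ∈ range M, g i ^ α ≤
      ∑ i ∈ range K, g i ^ α + ∑ i ∈ range (M - (K + 1)), g' i ^ α + 2 ^ α := by
    rcases hK.eq_or_lt with rfl | hK
    · rw [Nat.sub_eq_zero_of_le K.le_succ, sum_range_zero, add_zero]
      exact le_add_of_nonneg_right (by positivity)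
    · have hsum : ∑ i ∈ range (M - (K + 1)), g' i ^ α =
          ∑ i ∈ range (M - (K + 1)), g (M - 1 - i) ^ α :=
        sum_congr rfl fun i hi => by rw [hrev i (by have := mem_range.1 hi; omega)]
      have hgK := Real.rpow_le_rpow (hg.nonneg K) (hg.le_two K) (zero_le_one.trans hα.le)
      rw [← sum_range_add_sum_range_reverse (fun i => g i ^ α) (Nat.succ_le_of_lt hK),
        sum_range_succ, hsum]
      linarith
  have ranges : ∑ j ∈ range K, r j ^ α + ∑ j ∈ range (M - (K + 1)), r (M - j) ^ α ≤
      ∑ j ∈ range (M + 1), r j ^ α := by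
    rw [← sum_range_add_sum_range_reverse (fun j => r j ^ α) (hK.trans M.le_succ)]
    exact add_le_add_right (sum_le_sum_of_subset_of_nonneg (range_mono (by omega)) fun j _ _ =>
      Real.rpow_nonneg (hr _ (M.sub_le j)) α) _
  rw [switchPenalty]
  linarith

lemma ne_of_mem_Ico_add_one (hg : AlternatesOneTwo g) {j : ℕ} {x y : ℝ}
    (hx : x ∈ Set.Ico (g (j + 1)) (g (j + 1) + 1)) (hy : y ∈ Set.Ico (g j) (g j + 1)) : x ≠ y := by
  rintro rfl
  rcases hg j with ⟨h, h'⟩ | ⟨h, h'⟩ <;> rw [h'] at hx <;> rw [h] at hy <;>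
    linarith [hx.1, hx.2, hy.1, hy.2]

lemma pred_le_card_ne_add_card_looseIndices (hg : AlternatesOneTwo g)
    (hrev : ∀ i < M, g' i = g (M - 1 - i)) (r r' : ℕ → ℝ) :
    M - 1 ≤ #{j ∈ Ico 1 M | r j ≠ r' j} + #(looseIndices g r M) +
      #(looseIndices g' (fun j => r' (M - j)) M) := by
  set changed := {j ∈ Ico 1 M | r j ≠ r' j}
  set loose := looseIndices g r M
  set loose' := looseIndices g' (fun j => r' (M - j)) M
  have hcover : Ico 1 M ⊆ changed ∪ loose ∪ loose'.image (M - ·) := by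
    intro j hj
    obtain ⟨hj₁, hjM⟩ := mem_Ico.1 hj
    by_contra hcon
    simp only [mem_union, not_or] at hcon
    obtain ⟨⟨hchanged, htight⟩, htight'⟩ := hcon
    replace htight' : M - j ∉ loose' := fun h => htight' (mem_image.2 ⟨_, h, by omega⟩)
    simp only [loose, loose', looseIndices, mem_filter, mem_range, hjM, true_and, not_not,
      show M - j < M by omega, Nat.sub_sub_self hjM.le, hrev (M - j) (by omega),
      show M - 1 - (M - j) = j - 1 by omega] at htight htight'
    rw [← Nat.sub_add_cancel hj₁] at htight
    refine hchanged (mem_filter.2 ⟨hj, ?_⟩)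
    have := ne_of_mem_Ico_add_one hg htight htight'
    rwa [Nat.sub_add_cancel hj₁] at this
  calc M - 1 = #(Ico 1 M) := (Nat.card_Ico 1 M).symm
    _ ≤ #(changed ∪ loose ∪ loose'.image (M - ·)) := card_le_card hcover
    _ ≤ #changed + #loose + #(loose'.image (M - ·)) :=
      (card_union_le _ _).trans (Nat.add_le_add_right (card_union_le _ _) _)
    _ ≤ #changed + #loose + #loose' := Nat.add_le_add_left card_image_le _

end Reverse

/-- The gaps `1, 2, 1, 2, …` between the points of the circle instance, in forward order. -/
noncomputable def gap (i : ℕ) : ℝ := if Even i then 1 else 2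

/-- The gaps `2, 1, 2, 1, …` between the points of the circle instance, in backward order. -/
noncomputable def revGap (i : ℕ) : ℝ := gap (i + 1)

lemma alternatesOneTwo_gap : AlternatesOneTwo gap := fun i => by
  by_cases h : Even i <;> simp [gap, h, Nat.even_add_one]

lemma alternatesOneTwo_revGap : AlternatesOneTwo revGap := fun i => alternatesOneTwo_gap (i + 1)

lemma revGap_eq_gap {n i : ℕ} (hi : i < 2 * n) : revGap i = gap (2 * n - 1 - i) := by
  have : Even (i + 1) ↔ Even (2 * n - 1 - i) := by grind
  simp only [revGap, gap, this]

lemma sum_gap_rpow (α : ℝ) (n : ℕ) : ∑ i ∈ range (2 * n), gap i ^ α = n * (2 ^ α + 1) := by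
  induction n with
  | zero => simp
  | succ n ih =>
    rw [mul_add_one, sum_range_succ, sum_range_succ, ih]
    simp [gap]
    ring

lemma sum_revGap_rpow (α : ℝ) (n : ℕ) : ∑ i ∈ range (2 * n), revGap i ^ α = n * (2 ^ α + 1) := by
  rw [← sum_gap_rpow, ← sum_range_reflect (fun i => gap i ^ α)]
  exact sum_congr rfl fun i hi => by rw [revGap_eq_gap (mem_range.1 hi)]

section Broadcast

variable {X : Type*} [MetricSpace X] {P : Finset X} {s : X} {ρ : X → ℝ}

lemma Feasible.cost_nonneg (hρ : Feasible P s ρ) (α : ℝ) : 0 ≤ cost α P ρ :=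
  sum_nonneg fun p hp => Real.rpow_nonneg (hρ.1 p hp) α

lemma opt_le_cost (α : ℝ) (hρ : Feasible P s ρ) : opt α P s ≤ cost α P ρ := by
  refine csInf_le ⟨0, ?_⟩ ⟨ρ, hρ, rfl⟩
  rintro _ ⟨σ, hσ, rfl⟩
  exact hσ.cost_nonneg α

lemma opt_nonneg (α : ℝ) (P : Finset X) (s : X) : 0 ≤ opt α P s := by
  refine Real.sInf_nonneg ?_
  rintro _ ⟨σ, hσ, rfl⟩
  exact hσ.cost_nonneg α

lemma Feasible.mem_of_closed (hρ : Feasible P s ρ) {S : Set X} (hs : s ∈ S)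
    (hS : ∀ z ∈ S, z ∈ P → ∀ w ∈ P, dist z w ≤ ρ z → w ∈ S) {p : X} (hp : p ∈ P) : p ∈ S := by
  obtain ⟨m, f, rfl, rfl, hfP, hf⟩ := hρ.2 p hp
  suffices ∀ i ≤ m, f i ∈ S from this m le_rfl
  intro i hi
  induction i with
  | zero => exact hs
  | succ i ih => exact hS _ (ih (by omega)) (hfP i (by omega)) _ (hfP _ hi) (hf i hi)

lemma opt_le_sum_dist_rpow [DecidableEq X] {α : ℝ} (hα : α ≠ 0) {p : ℕ → X} {k : ℕ}
    (hp : Set.InjOn p (range (k + 1))) :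
    opt α ((range (k + 1)).image p) (p 0) ≤ ∑ i ∈ range k, dist (p i) (p (i + 1)) ^ α := by
  set index := Function.invFunOn p (range (k + 1))
  set σ : X → ℝ := fun x => if index x < k then dist (p (index x)) (p (index x + 1)) else 0
    with hσ
  have hindex : ∀ i ≤ k, index (p i) = i := fun i hi =>
    hp.leftInvOn_invFunOn (mem_coe.2 (mem_range.2 (Nat.lt_succ_of_le hi)))
  have hσp : ∀ i < k, σ (p i) = dist (p i) (p (i + 1)) := fun i hi => by
    simp only [hσ, hindex i hi.le, if_pos hi]
  have hfeasible : Feasible ((range (k + 1)).image p) (p 0) σ := by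
    refine ⟨fun x _ => by simp only [hσ]; split_ifs <;> positivity, fun x hx => ?_⟩
    obtain ⟨m, hm, rfl⟩ := mem_image.1 hx
    rw [mem_range] at hm
    exact ⟨m, p, rfl, rfl, fun i hi => mem_image_of_mem p (mem_range.2 (by omega)),
      fun i hi => (hσp i (by omega)).ge⟩
  calc opt α ((range (k + 1)).image p) (p 0) ≤ cost α ((range (k + 1)).image p) σ :=
        opt_le_cost α hfeasible
    _ = ∑ i ∈ range k, σ (p i) ^ α := by
      have hend : σ (p k) = 0 := by simp only [hσ, hindex k le_rfl, lt_irrefl, if_false]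
      rw [cost, sum_image hp, sum_range_succ, hend, Real.zero_rpow hα, add_zero]
    _ = ∑ i ∈ range k, dist (p i) (p (i + 1)) ^ α :=
      sum_congr rfl fun i hi => by rw [hσp i (mem_range.1 hi)]

end Broadcast

lemma dist_coe_addCircle_le (L u v : ℝ) : dist (u : AddCircle L) v ≤ |u - v| := by
  rw [dist_eq_norm, ← AddCircle.coe_sub]
  exact QuotientAddGroup.norm_mk_le_norm

lemma min_abs_sub_le_dist_coe_addCircle (L u v : ℝ) :
    min |u - v| (L - |u - v|) ≤ dist (u : AddCircle L) v := by
  rw [dist_eq_norm, ← AddCircle.coe_sub, AddCircle.norm_eq]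
  generalize round (L⁻¹ * (u - v)) = k
  generalize u - v = x
  by_cases hk : k = 0
  · simp [hk]
  · have hk1 : (1 : ℝ) ≤ |(k : ℝ)| := by exact_mod_cast Int.one_le_abs hk
    have := abs_sub_abs_le_abs_sub (k * L) x
    rw [abs_mul, abs_sub_comm] at this
    refine (min_le_right _ _).trans ?_
    nlinarith [le_abs_self L, abs_nonneg L]

lemma position_revGap_sub {n j : ℕ} (hj : j ≤ 2 * n) :
    position revGap (2 * n - j) = position gap (2 * n) - position gap j := by
  rw [position_reverse (fun _ => revGap_eq_gap) (Nat.sub_le _ _), Nat.sub_sub_self hj]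

section CircleInstance

/-- The length of the circle of the instance: going around it from the source, one meets an arc of
length `a`, then `2 * n` alternating gaps, then two arcs of length `h` separated by the new
point. -/
noncomputable def circumference (a h : ℝ) (n : ℕ) : ℝ := a + position gap (2 * n) + 2 * h

/-- The points `0, …, 2 * n` of the instance, separated by the alternating gaps. -/
noncomputable def point (a h : ℝ) (n j : ℕ) : AddCircle (circumference a h n) :=
  ↑(a + position gap j)

/-- The point inserted into the instance, half-way between the last point and the source. -/
noncomputable def newPoint (a h : ℝ) (n : ℕ) : AddCircle (circumference a h n) :=
  ↑(a + position gap (2 * n) + h)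

/-- The instance before the insertion; its source is `0`. -/
noncomputable def pointSet (a h : ℝ) (n : ℕ) : Finset (AddCircle (circumference a h n)) :=
  insert 0 ((range (2 * n + 1)).image (point a h n))

variable {a h : ℝ} {n : ℕ}

lemma circumference_pos (ha : 0 < a) (hh : 0 < h) : 0 < circumference a h n := by
  have := alternatesOneTwo_gap.position_nonneg (2 * n)
  rw [circumference]
  linarith

lemma zero_mem_pointSet : 0 ∈ pointSet a h n := mem_insert_self _ _

lemma point_mem_pointSet {j : ℕ} (hj : j ≤ 2 * n) : point a h n j ∈ pointSet a h n :=
  mem_insert_of_mem (mem_image_of_mem _ (mem_range.2 (Nat.lt_succ_of_le hj)))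

lemma eq_of_mem_pointSet {z : AddCircle (circumference a h n)} (hz : z ∈ pointSet a h n) :
    z = 0 ∨ ∃ j ≤ 2 * n, z = point a h n j := by
  simpa [pointSet, Nat.lt_succ_iff, eq_comm] using hz

lemma position_gap_mem_Icc {j : ℕ} (hj : j ≤ 2 * n) :
    position gap j ∈ Set.Icc 0 (position gap (2 * n)) :=
  ⟨alternatesOneTwo_gap.position_nonneg j, alternatesOneTwo_gap.strictMono_position.monotone hj⟩

lemma min_le_dist_point_point {j k : ℕ} (hj : j ≤ 2 * n) (hk : k ≤ 2 * n) :
    min |position gap j - position gap k| (a + 2 * h) ≤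
      dist (point a h n j) (point a h n k) := by
  have hjk : |position gap j - position gap k| ≤ position gap (2 * n) := by
    have := position_gap_mem_Icc hj
    have := position_gap_mem_Icc hk
    grind
  have := min_abs_sub_le_dist_coe_addCircle (circumference a h n)
    (a + position gap j) (a + position gap k)
  rw [add_sub_add_left_eq_sub, circumference] at this
  refine le_trans (min_le_min_left _ ?_) this
  linarith

lemma min_le_dist_zero_point (ha : 0 < a) {k : ℕ} (hk : k ≤ 2 * n) :
    min (a + position gap k) (position gap (2 * n) - position gap k + 2 * h) ≤
      dist 0 (point a h n k) := by
  have hk := position_gap_mem_Icc hk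
  have := min_abs_sub_le_dist_coe_addCircle (circumference a h n) 0 (a + position gap k)
  rw [zero_sub, abs_neg, abs_of_nonneg (by linarith [hk.1]), circumference] at this
  refine le_trans (min_le_min_left _ ?_) this
  linarith

lemma min_le_dist_newPoint_point (hh : 0 < h) {k : ℕ} (hk : k ≤ 2 * n) :
    min (h + a + position gap k) (h + (position gap (2 * n) - position gap k)) ≤
      dist (newPoint a h n) (point a h n k) := by
  have hk := position_gap_mem_Icc hk
  have := min_abs_sub_le_dist_coe_addCircle (circumference a h n)
    (a + position gap (2 * n) + h) (a + position gap k)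
  rw [abs_of_nonneg (by linarith [hk.2]), min_comm, circumference] at this
  exact le_trans (min_le_min (by linarith) (by linarith)) this

lemma le_dist_zero_newPoint (ha : 0 < a) (hh : 0 < h) : h ≤ dist 0 (newPoint a h n) := by
  have hn := alternatesOneTwo_gap.position_nonneg (2 * n)
  have := min_abs_sub_le_dist_coe_addCircle (circumference a h n) 0 (a + position gap (2 * n) + h)
  rw [zero_sub, abs_neg, abs_of_nonneg (by linarith), circumference] at this
  exact le_trans (le_min (by linarith) (by linarith)) this

lemma point_ne_zero (ha : 0 < a) (hh : 0 < h) {k : ℕ} (hk : k ≤ 2 * n) : point a h n k ≠ 0 := by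
  have hpos := position_gap_mem_Icc hk
  refine (dist_pos.1 (lt_of_lt_of_le (lt_min ?_ ?_) (min_le_dist_zero_point ha hk))).symm
  · linarith [hpos.1]
  · linarith [hpos.2]

lemma newPoint_ne_point (ha : 0 < a) (hh : 0 < h) {k : ℕ} (hk : k ≤ 2 * n) :
    newPoint a h n ≠ point a h n k := by
  have hpos := position_gap_mem_Icc hk
  refine dist_pos.1 (lt_of_lt_of_le (lt_min ?_ ?_) (min_le_dist_newPoint_point hh hk))
  · linarith [hpos.1]
  · linarith [hpos.2]

lemma newPoint_notMem_pointSet (ha : 0 < a) (hh : 0 < h) : newPoint a h n ∉ pointSet a h n := by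
  intro hmem
  rcases eq_of_mem_pointSet hmem with heq | ⟨k, hk, heq⟩
  · exact (dist_pos.1 (hh.trans_le (le_dist_zero_newPoint ha hh))) heq.symm
  · exact newPoint_ne_point ha hh hk heq

lemma injOn_point (ha : 0 < a) (hh : 0 < h) :
    Set.InjOn (point a h n) (range (2 * n + 1)) := by
  intro j hj k hk hjk
  simp only [coe_range, Set.mem_Iio, Nat.lt_succ_iff] at hj hk
  by_contra hne
  have hpos : 0 < |position gap j - position gap k| :=
    abs_pos.2 (sub_ne_zero.2 (alternatesOneTwo_gap.strictMono_position.injective.ne hne))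
  exact dist_pos.1 ((lt_min hpos (by linarith)).trans_le (min_le_dist_point_point hj hk)) hjk

lemma zero_notMem_image_point (ha : 0 < a) (hh : 0 < h) :
    0 ∉ (range (2 * n + 1)).image (point a h n) := by
  simp only [mem_image, mem_range, not_exists, not_and]
  exact fun k hk => point_ne_zero ha hh (Nat.lt_succ_iff.1 hk)

lemma card_pointSet (ha : 0 < a) (hh : 0 < h) : #(pointSet a h n) = 2 * n + 2 := by
  rw [pointSet, card_insert_of_notMem (zero_notMem_image_point ha hh),
    card_image_of_injOn (injOn_point ha hh), card_range]

lemma cost_pointSet (ha : 0 < a) (hh : 0 < h) (α : ℝ)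
    (ρ : AddCircle (circumference a h n) → ℝ) : cost α (pointSet a h n) ρ =
      ρ 0 ^ α + ∑ j ∈ range (2 * n + 1), ρ (point a h n j) ^ α := by
  rw [cost, pointSet, sum_insert (zero_notMem_image_point ha hh), sum_image (injOn_point ha hh)]

lemma cost_insert_newPoint (ha : 0 < a) (hh : 0 < h) (α : ℝ)
    (ρ : AddCircle (circumference a h n) → ℝ) :
    cost α (insert (newPoint a h n) (pointSet a h n)) ρ = ρ (newPoint a h n) ^ α +
      (ρ 0 ^ α + ∑ j ∈ range (2 * n + 1), ρ (point a h n j) ^ α) := by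
  rw [← cost_pointSet ha hh, cost, sum_insert (newPoint_notMem_pointSet ha hh), cost]

/-- The tour of `pointSet` that starts at the source and follows the gaps forwards. -/
noncomputable def forwardTour (a h : ℝ) (n : ℕ) : ℕ → AddCircle (circumference a h n)
  | 0 => 0
  | j + 1 => point a h n j

/-- The tour of the enlarged instance that starts at the source, visits the new point first, and
then follows the gaps backwards. -/
noncomputable def backwardTour (a h : ℝ) (n : ℕ) : ℕ → AddCircle (circumference a h n)
  | 0 => 0
  | 1 => newPoint a h n
  | j + 2 => point a h n (2 * n - j)

lemma image_forwardTour :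
    (range (2 * n + 1 + 1)).image (forwardTour a h n) = pointSet a h n := by
  rw [range_add_one', image_insert, map_eq_image, image_image]
  rfl

lemma image_backwardTour : (range (2 * n + 2 + 1)).image (backwardTour a h n) =
    insert (newPoint a h n) (pointSet a h n) := by
  ext z
  simp only [pointSet, mem_image, mem_insert, mem_range]
  constructor
  · rintro ⟨_ | _ | j, hj, rfl⟩
    · exact Or.inr (Or.inl rfl)
    · exact Or.inl rfl
    · exact Or.inr (Or.inr ⟨2 * n - j, by omega, rfl⟩)
  · rintro (rfl | rfl | ⟨j, hj, rfl⟩)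
    · exact ⟨1, by omega, rfl⟩
    · exact ⟨0, by omega, rfl⟩
    · refine ⟨2 * n - j + 2, by omega, ?_⟩
      rw [backwardTour, Nat.sub_sub_self (Nat.lt_succ_iff.1 hj)]

lemma dist_point_succ_le (j : ℕ) : dist (point a h n j) (point a h n (j + 1)) ≤ gap j := by
  refine (dist_coe_addCircle_le _ _ _).trans ?_
  rw [position_succ, abs_sub_comm, add_sub_add_left_eq_sub, add_sub_cancel_left,
    abs_of_nonneg (alternatesOneTwo_gap.nonneg j)]

lemma dist_zero_point_zero_le (ha : 0 ≤ a) : dist 0 (point a h n 0) ≤ a := by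
  refine (dist_coe_addCircle_le _ 0 _).trans ?_
  simp [abs_of_nonneg ha]

lemma dist_newPoint_point_le (hh : 0 ≤ h) : dist (newPoint a h n) (point a h n (2 * n)) ≤ h := by
  refine (dist_coe_addCircle_le _ _ _).trans ?_
  rw [add_sub_cancel_left, abs_of_nonneg hh]

lemma dist_zero_newPoint_le (hh : 0 ≤ h) : dist 0 (newPoint a h n) ≤ h := by
  rw [← AddCircle.coe_period (circumference a h n)]
  refine (dist_coe_addCircle_le _ _ _).trans ?_
  rw [circumference, abs_le]
  constructor <;> linarith

lemma dist_backwardTour_add_two_le {i : ℕ} (hi : i < 2 * n) :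
    dist (backwardTour a h n (i + 2)) (backwardTour a h n (i + 3)) ≤ revGap i := by
  have hsub : 2 * n - i = 2 * n - (i + 1) + 1 := by omega
  rw [backwardTour, backwardTour, hsub, dist_comm, revGap_eq_gap hi, Nat.sub_sub, add_comm 1]
  exact dist_point_succ_le _

lemma opt_pointSet_le {α : ℝ} (hα : 0 < α) (ha : 0 < a) (hh : 0 < h) :
    opt α (pointSet a h n) 0 ≤ a ^ α + n * (2 ^ α + 1) := by
  have htour : Set.InjOn (forwardTour a h n) (range (2 * n + 1 + 1)) := by
    rw [← card_image_iff, image_forwardTour, card_pointSet ha hh, card_range]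
  have hopt := opt_le_sum_dist_rpow hα.ne' htour
  rw [image_forwardTour, sum_range_succ'] at hopt
  calc opt α (pointSet a h n) 0 ≤ _ := hopt
    _ ≤ ∑ i ∈ range (2 * n), gap i ^ α + a ^ α := by
      gcongr with i
      exacts [dist_point_succ_le i, dist_zero_point_zero_le ha.le]
    _ = a ^ α + n * (2 ^ α + 1) := by rw [sum_gap_rpow, add_comm]

lemma opt_insert_newPoint_le {α : ℝ} (hα : 0 < α) (ha : 0 < a) (hh : 0 < h) :
    opt α (insert (newPoint a h n) (pointSet a h n)) 0 ≤ 2 * h ^ α + n * (2 ^ α + 1) := by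
  have htour : Set.InjOn (backwardTour a h n) (range (2 * n + 2 + 1)) := by
    rw [← card_image_iff, image_backwardTour, card_insert_of_notMem
      (newPoint_notMem_pointSet ha hh), card_pointSet ha hh, card_range]
  have hopt := opt_le_sum_dist_rpow hα.ne' htour
  rw [image_backwardTour, sum_range_succ', sum_range_succ'] at hopt
  calc opt α (insert (newPoint a h n) (pointSet a h n)) 0 ≤ _ := hopt
    _ ≤ ∑ i ∈ range (2 * n), revGap i ^ α + h ^ α + h ^ α := by
      refine add_le_add (add_le_add (sum_le_sum fun i hi => ?_) ?_) ?_ <;>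
        refine Real.rpow_le_rpow dist_nonneg ?_ hα.le
      · exact dist_backwardTour_add_two_le (mem_range.1 hi)
      · exact dist_newPoint_point_le hh.le
      · exact dist_zero_newPoint_le hh.le
    _ = 2 * h ^ α + n * (2 ^ α + 1) := by
      rw [sum_revGap_rpow]
      ring

/-- Under `ρ`, point `j` is reached either forwards, through all gaps before it, where the source
and the new point reach as far as `E`, or backwards, through all gaps after it, where they reach as
far as `E'`. -/
def Reached (ρ : AddCircle (circumference a h n) → ℝ) (E E' : ℝ) (j : ℕ) : Prop :=
  ForwardReached gap (fun i => ρ (point a h n i)) E j ∨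
    ForwardReached revGap (fun i => ρ (point a h n (2 * n - i))) E' (2 * n - j)

variable {ρ : AddCircle (circumference a h n) → ℝ} {E E' : ℝ}

lemma reached_of_position_le {j : ℕ} (hj : j ≤ 2 * n)
    (hpos : position gap j ≤ E ∨ position gap (2 * n) - position gap j ≤ E') :
    Reached ρ E E' j := by
  rw [← position_revGap_sub hj] at hpos
  exact hpos.imp (.of_position_le alternatesOneTwo_gap.nonneg)
    (.of_position_le alternatesOneTwo_revGap.nonneg)

lemma Reached.step {j k : ℕ} (hj : j ≤ 2 * n) (hk : k ≤ 2 * n) (hreached : Reached ρ E E' j)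
    (hjk : |position gap j - position gap k| ≤ ρ (point a h n j)) : Reached ρ E E' k := by
  obtain ⟨hleft, hright⟩ := abs_le.1 hjk
  refine hreached.imp (fun hf => hf.step alternatesOneTwo_gap.nonneg (by linarith))
    fun hb => hb.step alternatesOneTwo_revGap.nonneg ?_
  rw [position_revGap_sub hj, position_revGap_sub hk, Nat.sub_sub_self hj]
  linarith

lemma Feasible.reached (ha : 0 < a) (hh : 0 < h) {Q : Finset (AddCircle (circumference a h n))}
    (hQ : Q ⊆ insert (newPoint a h n) (pointSet a h n)) (hρ : Feasible Q 0 ρ)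
    (hwrap : ∀ j ≤ 2 * n, ρ (point a h n j) < a + 2 * h)
    (hsource : ρ 0 ≤ a + E) (hsource' : ρ 0 ≤ 2 * h + E')
    (hnew : newPoint a h n ∈ Q → ρ (newPoint a h n) ≤ h + a + E ∧ ρ (newPoint a h n) ≤ h + E')
    {j : ℕ} (hj : j ≤ 2 * n) (hjQ : point a h n j ∈ Q) : Reached ρ E E' j := by
  refine hρ.mem_of_closed (S := {z | ∀ k ≤ 2 * n, z = point a h n k → Reached ρ E E' k})
    ?_ ?_ hjQ j hj rfl
  · exact fun k hk h0 => absurd h0.symm (point_ne_zero ha hh hk)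
  · rintro z hz hzQ _ - hd k hk rfl
    rcases mem_insert.1 (hQ hzQ) with rfl | hzP
    · obtain ⟨hE, hE'⟩ := hnew hzQ
      refine reached_of_position_le hk ?_
      exact (min_le_iff.1 ((min_le_dist_newPoint_point hh hk).trans hd)).imp
        (fun _ => by linarith) fun _ => by linarith
    rcases eq_of_mem_pointSet hzP with rfl | ⟨i, hi, rfl⟩
    · refine reached_of_position_le hk ?_
      exact (min_le_iff.1 ((min_le_dist_zero_point ha hk).trans hd)).imp
        (fun _ => by linarith) fun _ => by linarith
    · refine (hz i hi rfl).step hi hk ?_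
      exact (min_le_iff.1 ((min_le_dist_point_point hi hk).trans hd)).resolve_right
        (hwrap i hi).not_ge

end CircleInstance

lemma lt_add_of_sum_rpow_lt {α : ℝ} (hα : 1 ≤ α) {ι : Type*} {s : Finset ι} {r : ι → ℝ}
    (hr : ∀ i ∈ s, 0 ≤ r i) {x y : ℝ} (hx : 0 ≤ x) (hy : 0 ≤ y)
    (h : ∑ i ∈ s, r i ^ α < x ^ α + y ^ α) {i : ι} (hi : i ∈ s) : r i < x + y := by
  have hterm : r i ^ α ≤ ∑ i ∈ s, r i ^ α :=
    single_le_sum (fun j hj => Real.rpow_nonneg (hr j hj) α) hi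
  refine lt_of_not_ge fun hle => ?_
  have := Real.rpow_le_rpow (add_nonneg hx hy) hle (zero_le_one.trans hα)
  linarith [Real.add_rpow_le_rpow_add hx hy hα]

/-- Arc lengths for which, at approximation ratio `c`, the instance must be broadcast forwards
before the insertion and backwards after it. Here `c * (a ^ α + n * (2 ^ α + 1))` and
`c * (2 * h ^ α + n * (2 ^ α + 1))` bound the admissible costs before and after the insertion, and
the last two fields say that these budgets do not pay for a range `2 * h`, respectively `a`,
with which both directions could be mixed. -/
structure SeparatingLengths (α c : ℝ) (n : ℕ) (a h : ℝ) : Prop where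
  two_le_a : 2 ≤ a
  two_le_h : 2 ≤ h
  a_le : a ≤ 2 * h
  rpow_a : a ^ α = n * (2 ^ α + 1)
  two_mul_rpow_h_lt : 2 * h ^ α < a ^ α
  budget_before_lt : ∀ R, R ^ α ≤ c * (a ^ α + n * (2 ^ α + 1)) →
    c * (a ^ α + n * (2 ^ α + 1)) + switchPenalty α R < (2 * h) ^ α + n * (2 ^ α + 1)
  budget_after_lt : ∀ R, R ^ α ≤ c * (2 * h ^ α + n * (2 ^ α + 1)) →
    c * (2 * h ^ α + n * (2 ^ α + 1)) + switchPenalty α R < a ^ α + n * (2 ^ α + 1)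

section SeparatingLengths

variable {α c a h : ℝ} {n : ℕ} {ρ : AddCircle (circumference a h n) → ℝ}

lemma SeparatingLengths.pos (hL : SeparatingLengths α c n a h) : 0 < a ∧ 0 < h :=
  ⟨zero_lt_two.trans_le hL.two_le_a, zero_lt_two.trans_le hL.two_le_h⟩

lemma Feasible.lt_add_of_cost_lt (hα : 1 ≤ α) (ha : 0 < a) (hh : 0 < h)
    {Q : Finset (AddCircle (circumference a h n))} {s : AddCircle (circumference a h n)}
    (hPQ : pointSet a h n ⊆ Q) (hρ : Feasible Q s ρ) (hcost : cost α Q ρ < a ^ α + (2 * h) ^ α)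
    {j : ℕ} (hj : j ≤ 2 * n) : ρ (point a h n j) < a + 2 * h :=
  lt_add_of_sum_rpow_lt hα hρ.1 ha.le (by linarith) hcost (hPQ (point_mem_pointSet hj))

lemma sum_rpow_le_of_forall_reached (hα : 1 < α) {R : ℝ} (hR : 0 ≤ R)
    (hρ : ∀ j ≤ 2 * n, 0 ≤ ρ (point a h n j)) (hreached : ∀ j ≤ 2 * n, Reached ρ R R j) :
    n * (2 ^ α + 1) ≤ ∑ j ∈ range (2 * n + 1), ρ (point a h n j) ^ α + switchPenalty α R := by
  rw [← sum_gap_rpow α n]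
  exact sum_rpow_le_sum_rpow_add_switchPenalty hα alternatesOneTwo_gap alternatesOneTwo_revGap
    (fun i hi => revGap_eq_gap hi) hρ hR hreached

lemma Feasible.forall_point_nonneg {Q : Finset (AddCircle (circumference a h n))}
    {s : AddCircle (circumference a h n)} (hPQ : pointSet a h n ⊆ Q) (hρ : Feasible Q s ρ) :
    ∀ j ≤ 2 * n, 0 ≤ ρ (point a h n j) :=
  fun _ hj => hρ.1 _ (hPQ (point_mem_pointSet hj))

lemma Feasible.forall_reached_pointSet (hα : 1 < α) (hL : SeparatingLengths α c n a h)
    (hρ : Feasible (pointSet a h n) 0 ρ)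
    (hcost : cost α (pointSet a h n) ρ ≤ c * (a ^ α + n * (2 ^ α + 1))) {E E' : ℝ}
    (hsource : ρ 0 ≤ a + E) (hsource' : ρ 0 ≤ 2 * h + E') : ∀ j ≤ 2 * n, Reached ρ E E' j := by
  obtain ⟨ha, hh⟩ := hL.pos
  have hbudget := hL.budget_before_lt 0 (by
    rw [Real.zero_rpow (by linarith)]
    exact (hρ.cost_nonneg α).trans hcost)
  rw [switchPenalty_zero] at hbudget
  have hpenalty : (0 : ℝ) < 2 ^ α := by positivity
  have hwrap : ∀ j ≤ 2 * n, ρ (point a h n j) < a + 2 * h := fun j hj =>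
    hρ.lt_add_of_cost_lt hα.le ha hh subset_rfl (by linarith [hL.rpow_a]) hj
  exact fun j hj => hρ.reached ha hh (subset_insert _ _) hwrap hsource hsource'
    (fun hq => absurd hq (newPoint_notMem_pointSet ha hh)) hj (point_mem_pointSet hj)

lemma Feasible.source_lt_two_mul (hα : 1 < α) (hL : SeparatingLengths α c n a h)
    (hρ : Feasible (pointSet a h n) 0 ρ)
    (hcost : cost α (pointSet a h n) ρ ≤ c * (a ^ α + n * (2 ^ α + 1))) : ρ 0 < 2 * h := by
  obtain ⟨ha, hh⟩ := hL.pos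
  by_contra! hle
  have hR : 0 ≤ ρ 0 := hρ.1 0 zero_mem_pointSet
  have hpoint := hρ.forall_point_nonneg subset_rfl
  have hswitch := sum_rpow_le_of_forall_reached hα hR hpoint
    (hρ.forall_reached_pointSet hα hL hcost (by linarith) (by linarith))
  have hpow := Real.rpow_le_rpow (by linarith) hle (zero_le_one.trans hα.le)
  have hsum : 0 ≤ ∑ j ∈ range (2 * n + 1), ρ (point a h n j) ^ α := sum_nonneg fun j hj =>
    Real.rpow_nonneg (hpoint j (mem_range_succ_iff.1 hj)) α
  have hcost_eq := cost_pointSet ha hh α ρ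
  have hbudget := hL.budget_before_lt (ρ 0) (by linarith)
  linarith

theorem Feasible.le_cost_pointSet (hα : 1 < α) (hL : SeparatingLengths α c n a h)
    (hρ : Feasible (pointSet a h n) 0 ρ)
    (hcost : cost α (pointSet a h n) ρ ≤ c * (a ^ α + n * (2 ^ α + 1))) :
    a ^ α + n * (2 ^ α + 1) +
        minExcess α * #(looseIndices gap (fun j => ρ (point a h n j)) (2 * n)) ≤
      cost α (pointSet a h n) ρ := by
  obtain ⟨ha, hh⟩ := hL.pos
  have hpoint := hρ.forall_point_nonneg subset_rfl
  have hforward : ForwardReached gap (fun j => ρ (point a h n j)) (ρ 0 - a) (2 * n) :=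
    (hρ.forall_reached_pointSet hα hL hcost (E := ρ 0 - a) (E' := ρ 0 - 2 * h) (by linarith)
      (by linarith) (2 * n) le_rfl).resolve_right
      fun hback => by linarith [hback.1, hρ.source_lt_two_mul hα hL hcost]
  have hloose := sum_rpow_add_card_looseIndices_le hα alternatesOneTwo_gap
    (fun j hj => hpoint j hj.le) hforward
  have hsource := rpow_add_prefixCharge_le hα alternatesOneTwo_gap (2 * n) hL.two_le_a hforward.1
  have hlast := Real.rpow_nonneg (hpoint (2 * n) le_rfl) α
  rw [sum_gap_rpow] at hloose
  rw [add_sub_cancel] at hsource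
  rw [cost_pointSet ha hh, sum_range_succ]
  linarith

lemma Feasible.forall_reached_insert (hα : 1 < α) (hL : SeparatingLengths α c n a h)
    (hρ : Feasible (insert (newPoint a h n) (pointSet a h n)) 0 ρ)
    (hcost : cost α (insert (newPoint a h n) (pointSet a h n)) ρ ≤
      c * (2 * h ^ α + n * (2 ^ α + 1))) {E E' : ℝ}
    (hsource : ρ 0 ≤ a + E) (hsource' : ρ 0 ≤ 2 * h + E')
    (hnew : ρ (newPoint a h n) ≤ h + a + E) (hnew' : ρ (newPoint a h n) ≤ h + E') :
    ∀ j ≤ 2 * n, Reached ρ E E' j := by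
  obtain ⟨ha, hh⟩ := hL.pos
  have hα0 : 0 ≤ α := zero_le_one.trans hα.le
  have hbudget := hL.budget_after_lt 0 (by
    rw [Real.zero_rpow (by linarith)]
    exact (hρ.cost_nonneg α).trans hcost)
  rw [switchPenalty_zero] at hbudget
  have hpenalty : (0 : ℝ) < 2 ^ α := by positivity
  have hpow := Real.rpow_le_rpow ha.le hL.a_le hα0
  have hwrap : ∀ j ≤ 2 * n, ρ (point a h n j) < a + 2 * h := fun j hj =>
    hρ.lt_add_of_cost_lt hα.le ha hh (subset_insert _ _) (by linarith [hL.rpow_a]) hj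
  exact fun j hj => hρ.reached ha hh subset_rfl hwrap hsource hsource' (fun _ => ⟨hnew, hnew'⟩) hj
    (mem_insert_of_mem (point_mem_pointSet hj))

lemma Feasible.max_source_new_lt (hα : 1 < α) (hL : SeparatingLengths α c n a h)
    (hρ : Feasible (insert (newPoint a h n) (pointSet a h n)) 0 ρ)
    (hcost : cost α (insert (newPoint a h n) (pointSet a h n)) ρ ≤
      c * (2 * h ^ α + n * (2 ^ α + 1))) : max (ρ 0) (ρ (newPoint a h n)) < a := by
  obtain ⟨ha, hh⟩ := hL.pos
  by_contra! hle
  set R := max (ρ 0) (ρ (newPoint a h n)) with hR_def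
  have hsource : ρ 0 ≤ R := le_max_left _ _
  have hnew : ρ (newPoint a h n) ≤ R := le_max_right _ _
  have hR : 0 ≤ R := ha.le.trans hle
  have hpoint := hρ.forall_point_nonneg (subset_insert _ _)
  have hswitch := sum_rpow_le_of_forall_reached hα hR hpoint
    (hρ.forall_reached_insert hα hL hcost (by linarith) (by linarith) (by linarith) (by linarith))
  have hpow := Real.rpow_le_rpow ha.le hle (zero_le_one.trans hα.le)
  have hmax : R ^ α ≤ ρ 0 ^ α + ρ (newPoint a h n) ^ α := by
    have h0 := Real.rpow_nonneg (hρ.1 0 (mem_insert_of_mem zero_mem_pointSet)) α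
    have hq := Real.rpow_nonneg (hρ.1 _ (mem_insert_self _ _)) α
    rcases max_choice (ρ 0) (ρ (newPoint a h n)) with h | h <;> rw [hR_def, h] <;> linarith
  have hsum : 0 ≤ ∑ j ∈ range (2 * n + 1), ρ (point a h n j) ^ α := sum_nonneg fun j hj =>
    Real.rpow_nonneg (hpoint j (mem_range_succ_iff.1 hj)) α
  have hcost_eq := cost_insert_newPoint ha hh α ρ
  have hbudget := hL.budget_after_lt R (by linarith)
  linarith

lemma Feasible.le_source_insert (ha : 0 < a) (hh : 0 < h) (hah : h ≤ a)
    (hρ : Feasible (insert (newPoint a h n) (pointSet a h n)) 0 ρ) : h ≤ ρ 0 := by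
  by_contra! hlt
  suffices newPoint a h n ∈ ({0} : Set (AddCircle (circumference a h n))) from
    newPoint_notMem_pointSet ha hh (this ▸ zero_mem_pointSet)
  refine hρ.mem_of_closed (S := {0}) rfl ?_ (mem_insert_self _ _)
  rintro _ rfl - w hw hd
  by_contra hw0
  rcases mem_insert.1 hw with rfl | hwP
  · linarith [le_dist_zero_newPoint (n := n) ha hh]
  obtain rfl | ⟨k, hk, rfl⟩ := eq_of_mem_pointSet hwP
  · exact hw0 rfl
  · have hpos := alternatesOneTwo_gap.position_nonneg k
    have hle := position_mono alternatesOneTwo_gap.nonneg hk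
    rcases min_le_iff.1 ((min_le_dist_zero_point ha hk).trans hd) with h | h <;> linarith

lemma Feasible.backwardReached_insert (hα : 1 < α) (hL : SeparatingLengths α c n a h)
    (hρ : Feasible (insert (newPoint a h n) (pointSet a h n)) 0 ρ)
    (hcost : cost α (insert (newPoint a h n) (pointSet a h n)) ρ ≤
      c * (2 * h ^ α + n * (2 ^ α + 1))) :
    ForwardReached revGap (fun j => ρ (point a h n (2 * n - j))) (ρ (newPoint a h n) - h)
      (2 * n) := by
  have hmax := hρ.max_source_new_lt hα hL hcost
  have hsource := le_max_left (ρ 0) (ρ (newPoint a h n))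
  have hnew := le_max_right (ρ 0) (ρ (newPoint a h n))
  set E' := max (ρ 0 - 2 * h) (ρ (newPoint a h n) - h) with hE'
  have hsource' : ρ 0 - 2 * h ≤ E' := le_max_left _ _
  have hnew' : ρ (newPoint a h n) - h ≤ E' := le_max_right _ _
  have hback : ForwardReached revGap (fun j => ρ (point a h n (2 * n - j))) E' (2 * n) :=
    (hρ.forall_reached_insert hα hL hcost (E := max (ρ 0) (ρ (newPoint a h n)) - a) (E' := E')
      (by linarith) (by linarith) (by linarith [hL.two_le_h]) (by linarith) 0
      (Nat.zero_le _)).resolve_left fun hforward => by linarith [hforward.1]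
  rcases max_choice (ρ 0 - 2 * h) (ρ (newPoint a h n) - h) with h | h <;> rw [hE', h] at hback
  · linarith [hback.1, hL.a_le]
  · exact hback

theorem Feasible.le_cost_insert (hα : 1 < α) (hL : SeparatingLengths α c n a h)
    (hρ : Feasible (insert (newPoint a h n) (pointSet a h n)) 0 ρ)
    (hcost : cost α (insert (newPoint a h n) (pointSet a h n)) ρ ≤
      c * (2 * h ^ α + n * (2 ^ α + 1))) :
    2 * h ^ α + n * (2 ^ α + 1) +
        minExcess α * #(looseIndices revGap (fun j => ρ (point a h n (2 * n - j))) (2 * n)) ≤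
      cost α (insert (newPoint a h n) (pointSet a h n)) ρ := by
  obtain ⟨ha, hh⟩ := hL.pos
  have hα0 : 0 ≤ α := zero_le_one.trans hα.le
  have hah : h ≤ a := le_of_lt <| (Real.rpow_lt_rpow_iff (z := α) hh.le ha.le (by linarith)).1 <| by
    linarith [hL.two_mul_rpow_h_lt, Real.rpow_nonneg hh.le α]
  have hpoint := hρ.forall_point_nonneg (subset_insert _ _)
  have hback := hρ.backwardReached_insert hα hL hcost
  have hloose := sum_rpow_add_card_looseIndices_le hα alternatesOneTwo_revGap
    (fun j _ => hpoint _ (Nat.sub_le _ j)) hback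
  have hnew := rpow_add_prefixCharge_le hα alternatesOneTwo_revGap (2 * n) hL.two_le_h hback.1
  have hsource := Real.rpow_le_rpow hh.le (hρ.le_source_insert ha hh hah) hα0
  have hfirst := Real.rpow_nonneg (hpoint 0 (Nat.zero_le _)) α
  have hsum := sum_range_reflect (fun j => ρ (point a h n j) ^ α) (2 * n + 1)
  simp only [Nat.add_sub_cancel] at hsum
  rw [sum_range_succ, Nat.sub_self] at hsum
  rw [sum_revGap_rpow] at hloose
  rw [add_sub_cancel] at hnew
  rw [cost_insert_newPoint ha hh]
  linarith

end SeparatingLengths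

lemma card_filter_ne_le_ncard {a h : ℝ} {n : ℕ} (ha : 0 < a) (hh : 0 < h)
    (ρ ρ' : AddCircle (circumference a h n) → ℝ) :
    #{j ∈ Ico 1 (2 * n) | ρ (point a h n j) ≠ ρ' (point a h n j)} ≤
      {p ∈ insert (newPoint a h n) (pointSet a h n : Set (AddCircle (circumference a h n))) |
        ρ' p ≠ Function.update ρ (newPoint a h n) 0 p}.ncard := by
  set changed := {j ∈ Ico 1 (2 * n) | ρ (point a h n j) ≠ ρ' (point a h n j)}
  have hlt {j : ℕ} (hj : j ∈ changed) : j < 2 * n + 1 := by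
    have := mem_Ico.1 (mem_filter.1 hj).1
    omega
  rw [← card_image_of_injOn ((injOn_point ha hh).mono fun j hj => mem_range.2 (hlt hj)),
    ← Set.ncard_coe_finset]
  refine Set.ncard_le_ncard ?_
    (((pointSet a h n).finite_toSet.insert _).subset (Set.sep_subset _ _))
  rw [coe_image]
  rintro _ ⟨j, hj, rfl⟩
  have hj' : j ≤ 2 * n := Nat.lt_succ_iff.1 (hlt hj)
  refine ⟨Set.mem_insert_of_mem _ (point_mem_pointSet hj'), ?_⟩
  rw [Function.update_of_ne (newPoint_ne_point ha hh hj').symm]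
  exact (mem_filter.1 hj).2.symm

/-- The approximation ratio up to which updates are shown to be expensive, namely the minimum of
the last two of the three bounds in `cAlpha`. -/
noncomputable def approxThreshold (α : ℝ) : ℝ :=
  min (1 + (2 ^ (α - 1) - 1) / (3 * 2 ^ α + 2)) (1 + minExcess α / (4 * (2 ^ α + 1)))

lemma approxThreshold_sub_one_mul_le (α : ℝ) :
    (approxThreshold α - 1) * (3 * 2 ^ α + 2) ≤ 2 ^ (α - 1) - 1 := by
  rw [← le_div_iff₀ (by positivity), sub_le_iff_le_add']
  exact min_le_left _ _

lemma approxThreshold_sub_one_mul_le_minExcess (α : ℝ) :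
    (approxThreshold α - 1) * (4 * (2 ^ α + 1)) ≤ minExcess α := by
  rw [← le_div_iff₀ (by positivity), sub_le_iff_le_add']
  exact min_le_right _ _

lemma one_lt_approxThreshold {α : ℝ} (hα : 1 < α) : 1 < approxThreshold α := by
  have h2 : (1 : ℝ) < 2 ^ (α - 1) := Real.one_lt_rpow one_lt_two (sub_pos.2 hα)
  have hm := minExcess_pos hα
  refine lt_min (lt_add_of_pos_right _ ?_) (lt_add_of_pos_right _ (by positivity))
  exact div_pos (sub_pos.2 h2) (by positivity)

lemma cAlpha_le_approxThreshold (α : ℝ) : cAlpha α ≤ approxThreshold α := min_le_right _ _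

lemma one_lt_cAlpha {α : ℝ} (hα : 1 < α) : 1 < cAlpha α := by
  refine lt_min ?_ (one_lt_approxThreshold hα)
  have h : (2 : ℝ) ^ (-3 : ℝ) < 2 ^ (α - 4) :=
    Real.rpow_lt_rpow_of_exponent_lt one_lt_two (by linarith)
  norm_num at h
  linarith

lemma exists_separating_ratio {k ε : ℝ} (hk : 1 < k) (hε : 0 < ε) (h : ε * (6 * k + 2) ≤ k - 1) :
    ∃ t, 0 < t ∧ t < 1 ∧ 1 + 2 * ε < t * k ∧ t * (1 + ε) < 1 - ε := by
  have hε₁ : ε < 1 / 6 := by nlinarith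
  obtain ⟨t, hlow, hhigh⟩ := exists_between (show (1 + 2 * ε) / k < (1 - ε) / (1 + ε) by
    rw [div_lt_div_iff₀ (by linarith) (by linarith)]
    nlinarith)
  rw [div_lt_iff₀ (by linarith)] at hlow
  rw [lt_div_iff₀ (by linarith)] at hhigh
  exact ⟨t, by nlinarith, by nlinarith, hlow, hhigh⟩

lemma two_rpow_eq_two_mul (α : ℝ) : (2 : ℝ) ^ α = 2 * 2 ^ (α - 1) := by
  rw [Real.rpow_sub_one two_ne_zero]
  ring

lemma separatingLengths_rpow_inv {α c t : ℝ} {n : ℕ} (hα : 0 < α) (hc : c ≤ 2)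
    (ht : 0 < t) (ht₁ : t < 1) (htk : 1 < t * 2 ^ (α - 1)) (hn : 2 ^ α ≤ t / 2 * (n * (2 ^ α + 1)))
    (hbefore : ∀ R : ℝ, R ^ α ≤ 4 * (n * (2 ^ α + 1)) →
      switchPenalty α R < (t * 2 ^ (α - 1) - 1 - 2 * (c - 1)) * (n * (2 ^ α + 1)))
    (hafter : ∀ R : ℝ, R ^ α ≤ 4 * (n * (2 ^ α + 1)) →
      switchPenalty α R < (1 - (c - 1) - t * c) * (n * (2 ^ α + 1))) :
    SeparatingLengths α c n ((n * (2 ^ α + 1)) ^ α⁻¹) ((t / 2 * (n * (2 ^ α + 1))) ^ α⁻¹) := by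
  set y : ℝ := n * (2 ^ α + 1)
  have hy : 0 ≤ y := by positivity
  have hty : t / 2 * y ≤ y := by nlinarith
  have hpow_a : (y ^ α⁻¹) ^ α = y := Real.rpow_inv_rpow hy hα.ne'
  have hpow_h : ((t / 2 * y) ^ α⁻¹) ^ α = t / 2 * y :=
    Real.rpow_inv_rpow (by positivity) hα.ne'
  have hpow_two_mul_h : (2 * (t / 2 * y) ^ α⁻¹) ^ α = t * 2 ^ (α - 1) * y := by
    rw [Real.mul_rpow zero_le_two (by positivity), hpow_h, two_rpow_eq_two_mul]
    ring
  have hy0 : 0 < y := by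
    have : (0 : ℝ) < 2 ^ α := by positivity
    nlinarith
  refine ⟨?_, ?_, ?_, hpow_a, ?_, fun R hR => ?_, fun R hR => ?_⟩
  · rw [Real.le_rpow_inv_iff_of_pos zero_le_two hy hα]
    exact hn.trans hty
  · rwa [Real.le_rpow_inv_iff_of_pos zero_le_two (by positivity) hα]
  · rw [← Real.rpow_le_rpow_iff (z := α) (by positivity) (by positivity) hα, hpow_a,
      hpow_two_mul_h]
    nlinarith
  · rw [hpow_a, hpow_h]
    nlinarith
  · rw [hpow_a] at hR ⊢
    rw [hpow_two_mul_h]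
    linarith [hbefore R (hR.trans (by nlinarith))]
  · rw [hpow_h] at hR ⊢
    rw [hpow_a]
    have hbound : c * (t + 1) ≤ 4 := by nlinarith
    have := mul_le_mul_of_nonneg_right hbound hy
    linarith [hafter R (hR.trans (by linarith))]

lemma eventually_separatingLengths {α c : ℝ} (hα : 1 < α) (hc : 1 < c)
    (hc' : (c - 1) * (3 * 2 ^ α + 2) ≤ 2 ^ (α - 1) - 1) :
    ∀ᶠ n : ℕ in Filter.atTop, ∃ a h, SeparatingLengths α c n a h := by
  have hk : (1 : ℝ) < 2 ^ (α - 1) := Real.one_lt_rpow one_lt_two (sub_pos.2 hα)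
  rw [two_rpow_eq_two_mul] at hc'
  have hc₂ : c ≤ 2 := by nlinarith
  obtain ⟨t, ht, ht₁, htk, htc⟩ := exists_separating_ratio hk (sub_pos.2 hc) (by linarith)
  have hm := minExcess_pos hα
  have hpenalty {δ : ℝ} (hδ : 0 < δ) :
      ∀ᶠ y : ℝ in Filter.atTop, ∀ R : ℝ, R ^ α ≤ 4 * y → switchPenalty α R < δ * y := by
    simpa only [switchPenalty, mul_assoc] using eventually_forall_rpow_le_imp_add_mul_lt hα
      (A := 2 ^ α) (C := 2 * (2 ^ α + minExcess α)) (by positivity) (by positivity) four_pos hδ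
  have hgrowth : Filter.Tendsto (fun n : ℕ => (n : ℝ) * (2 ^ α + 1)) Filter.atTop Filter.atTop :=
    tendsto_natCast_atTop_atTop.atTop_mul_const (by positivity)
  filter_upwards [
    hgrowth.eventually ((Filter.tendsto_id.const_mul_atTop (half_pos ht)).eventually_ge_atTop _),
    hgrowth.eventually (hpenalty (δ := t * 2 ^ (α - 1) - 1 - 2 * (c - 1)) (by linarith)),
    hgrowth.eventually (hpenalty (δ := 1 - (c - 1) - t * c) (by linarith))]
    with n hn hbefore hafter
  exact ⟨_, _, separatingLengths_rpow_inv (by linarith) hc₂ ht ht₁ (by linarith) hn hbefore hafter⟩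

section SeparatingLengths

variable {α c a h : ℝ} {n : ℕ} {ρ ρ' : AddCircle (circumference a h n) → ℝ}

lemma Feasible.two_mul_card_looseIndices_le (hα : 1 < α) (hL : SeparatingLengths α c n a h)
    (hc : (c - 1) * (4 * (2 ^ α + 1)) ≤ minExcess α) (hρ : Feasible (pointSet a h n) 0 ρ)
    (hcost : cost α (pointSet a h n) ρ ≤ c * (a ^ α + n * (2 ^ α + 1))) :
    2 * #(looseIndices gap (fun j => ρ (point a h n j)) (2 * n)) ≤ n := by
  have hbefore := (hρ.le_cost_pointSet hα hL hcost).trans hcost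
  have hwaste := mul_le_mul_of_nonneg_right hc (Nat.cast_nonneg (α := ℝ) n)
  rw [hL.rpow_a] at hbefore
  rw [← Nat.cast_le (α := ℝ), ← mul_le_mul_iff_right₀ (minExcess_pos hα)]
  push_cast
  linarith

lemma Feasible.two_mul_card_looseIndices_lt (hα : 1 < α) (hL : SeparatingLengths α c n a h)
    (hc₁ : 1 < c) (hc : (c - 1) * (4 * (2 ^ α + 1)) ≤ minExcess α)
    (hρ : Feasible (insert (newPoint a h n) (pointSet a h n)) 0 ρ)
    (hcost : cost α (insert (newPoint a h n) (pointSet a h n)) ρ ≤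
      c * (2 * h ^ α + n * (2 ^ α + 1))) :
    2 * #(looseIndices revGap (fun j => ρ (point a h n (2 * n - j))) (2 * n)) < n := by
  have hafter := (hρ.le_cost_insert hα hL hcost).trans hcost
  have hwaste := mul_le_mul_of_nonneg_right hc (Nat.cast_nonneg (α := ℝ) n)
  have hlt := mul_lt_mul_of_pos_left hL.two_mul_rpow_h_lt (sub_pos.2 hc₁)
  rw [hL.rpow_a] at hlt
  rw [← Nat.cast_lt (α := ℝ), ← mul_lt_mul_iff_right₀ (minExcess_pos hα)]
  push_cast
  linarith

lemma SeparatingLengths.le_ncard_ne (hα : 1 < α) (hL : SeparatingLengths α c n a h) (hc₁ : 1 < c)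
    (hc : (c - 1) * (4 * (2 ^ α + 1)) ≤ minExcess α) (hρ : Feasible (pointSet a h n) 0 ρ)
    (hcost : cost α (pointSet a h n) ρ ≤ c * opt α (pointSet a h n) 0)
    (hρ' : Feasible (insert (newPoint a h n) (pointSet a h n)) 0 ρ')
    (hcost' : cost α (insert (newPoint a h n) (pointSet a h n)) ρ' ≤
      c * opt α (insert (newPoint a h n) (pointSet a h n)) 0) :
    n ≤ {p ∈ insert (newPoint a h n) (pointSet a h n : Set (AddCircle (circumference a h n))) |
      ρ' p ≠ Function.update ρ (newPoint a h n) 0 p}.ncard := by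
  obtain ⟨ha, hh⟩ := hL.pos
  have hα0 : 0 < α := zero_lt_one.trans hα
  have hc0 : 0 ≤ c := zero_le_one.trans hc₁.le
  have hloose := hρ.two_mul_card_looseIndices_le hα hL hc
    (hcost.trans (mul_le_mul_of_nonneg_left (opt_pointSet_le hα0 ha hh) hc0))
  have hloose' := hρ'.two_mul_card_looseIndices_lt hα hL hc₁ hc
    (hcost'.trans (mul_le_mul_of_nonneg_left (opt_insert_newPoint_le hα0 ha hh) hc0))
  have hpred := pred_le_card_ne_add_card_looseIndices alternatesOneTwo_gap (M := 2 * n)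
    (fun _ => revGap_eq_gap) (fun j => ρ (point a h n j)) (fun j => ρ' (point a h n j))
  have hchanged := card_filter_ne_le_ncard ha hh ρ ρ'
  omega

end SeparatingLengths

theorem no_sas_on_circle_general {α c : ℝ} (hα : 1 < α) (hc : c ≤ approxThreshold α) :
    ∃ N : ℕ, ∀ n : ℕ, N ≤ n →
      ∃ L : ℝ, 0 < L ∧
      ∃ (P : Finset (AddCircle L)) (s q : AddCircle L),
        s ∈ P ∧ q ∉ P ∧ P.card = 2 * n + 2 ∧
        ∀ ρ ρ' : AddCircle L → ℝ,
          Feasible P s ρ → cost α P ρ ≤ c * opt α P s →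
          Feasible (insert q P) s ρ' →
          cost α (insert q P) ρ' ≤ c * opt α (insert q P) s →
          n ≤ {p ∈ insert q (P : Set (AddCircle L)) | ρ' p ≠ Function.update ρ q 0 p}.ncard := by
  obtain ⟨N, hN⟩ := Filter.eventually_atTop.1 <| eventually_separatingLengths hα
    (one_lt_approxThreshold hα) (approxThreshold_sub_one_mul_le α)
  refine ⟨N, fun n hn => ?_⟩
  obtain ⟨a, h, hL⟩ := hN n hn
  obtain ⟨ha, hh⟩ := hL.pos
  refine ⟨circumference a h n, circumference_pos ha hh, pointSet a h n, 0, newPoint a h n,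
    zero_mem_pointSet, newPoint_notMem_pointSet ha hh, card_pointSet ha hh,
    fun ρ ρ' hρ hcost hρ' hcost' => hL.le_ncard_ne hα (one_lt_approxThreshold hα)
      (approxThreshold_sub_one_mul_le_minExcess α) hρ (hcost.trans ?_) hρ' (hcost'.trans ?_)⟩
  · exact mul_le_mul_of_nonneg_right hc (opt_nonneg _ _ _)
  · exact mul_le_mul_of_nonneg_right hc (opt_nonneg _ _ _)

/-- The dynamic broadcast range-assignment problem on the circle admits no
stable approximation scheme: `c_α > 1`, and for all large `n` there is an instance of `2n+2`
points on a circle and an insertion forcing any `c_α`-approximate update algorithm to modify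
more than `2n/3 - 1` ranges. -/
theorem no_sas_on_circle (α : ℝ) (hα : 1 < α) :
    1 < cAlpha α ∧
    ∃ N : ℕ, ∀ n : ℕ, N ≤ n →
      ∃ L : ℝ, 0 < L ∧
      ∃ (P : Finset (AddCircle L)) (s q : AddCircle L),
        s ∈ P ∧ q ∉ P ∧ P.card = 2 * n + 2 ∧
        ∀ ρ ρ' : AddCircle L → ℝ,
          Feasible P s ρ → cost α P ρ ≤ cAlpha α * opt α P s →
          Feasible (insert q P) s ρ' →
          cost α (insert q P) ρ' ≤ cAlpha α * opt α (insert q P) s →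
          2 * (n : ℝ) / 3 - 1 <
            (({p ∈ insert q (P : Set (AddCircle L)) |
                ρ' p ≠ Function.update ρ q 0 p}.ncard : ℝ)) := by
  obtain ⟨N, hN⟩ := no_sas_on_circle_general hα (cAlpha_le_approxThreshold α)
  refine ⟨one_lt_cAlpha hα, N, fun n hn => ?_⟩
  obtain ⟨L, hL, P, s, q, hs, hq, hcard, hchanged⟩ := hN n hn
  refine ⟨L, hL, P, s, q, hs, hq, hcard, fun ρ ρ' hρ hcost hρ' hcost' => ?_⟩
  have := Nat.cast_le (α := ℝ).2 (hchanged ρ ρ' hρ hcost hρ' hcost')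
  have := Nat.cast_nonneg (α := ℝ) n
  linarith
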